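/- arXiv:1711.01928 — 4 statements merged into one kernel-verified Lean document; each statement's English description precedes it below -/
import Mathlib

section
/- Let t be real and let α, j be integers with α·j even. Define, for x ∈ (0,1), F_c(x) = exp(iπ(α² + j²)x/4)·exp(i(t/2)·log((1 − x)/x))·(x(1 − x))^{−1/4}·cos(πjαx/2) and F_s(x) the same expression with sin(πjαx/2) in place of cos(πjαx/2). Then ∫_{1/2}^{1} F_c(x) dx = exp(iπ(α + j)²/4)·conj(∫_{0}^{1/2} F_c(x) dx) and ∫_{1/2}^{1} F_s(x) dx = −exp(iπ(α + j)²/4)·conj(∫_{0}^{1/2} F_s(x) dx); consequently ∫_0^1 F_c = B_C + exp(iπ(α+j)²/4)·conj(B_C) and ∫_0^1 F_s = B_S − exp(iπ(α+j)²/4)·conj(B_S), where B_C = ∫_0^{1/2} F_c and B_S = ∫_0^{1/2} F_s. -/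
open Real MeasureTheory

lemma aux_reflect (G : ℝ → ℂ) (c : ℂ) (h : ∀ x, G (1 - x) = c * (starRingEnd ℂ) (G x)) :
    (∫ x in (1/2 : ℝ)..1, G x) = c * (starRingEnd ℂ) (∫ x in (0 : ℝ)..(1/2 : ℝ), G x) := by
  have h1 : (∫ x in (0 : ℝ)..(1/2 : ℝ), G (1 - x)) = ∫ x in (1/2 : ℝ)..1, G x := by
    rw [intervalIntegral.integral_comp_sub_left]
    norm_num
  rw [← h1]
  simp_rw [h]
  rw [intervalIntegral.integral_const_mul, intervalIntegral.intervalIntegral_eq_integral_uIoc,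
    intervalIntegral.intervalIntegral_eq_integral_uIoc]
  norm_num
  left
  exact integral_conj

lemma aux_integrable (G : ℝ → ℂ) (hm : Measurable G)
    (hb : ∀ x, ‖G x‖ ≤ |(x * (1 - x)) ^ (-(1 : ℝ) / 4)|) :
    IntervalIntegrable G volume 0 1 := by
  have hB := Complex.betaIntegral_convergent (u := 3/4) (v := 3/4) (by norm_num) (by norm_num)
  refine hB.mono_fun hm.aestronglyMeasurable ?_
  rw [Set.uIoc_of_le zero_le_one, ← Measure.restrict_congr_set Ioo_ae_eq_Ioc]
  refine (ae_restrict_iff' measurableSet_Ioo).2 (Filter.Eventually.of_forall ?_)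
  intro x hx
  have h0 : 0 < x := hx.1
  have h1 : 0 < 1 - x := by linarith [hx.2]
  refine (hb x).trans (le_of_eq ?_)
  have e : (1 - (x : ℂ)) = ((1 - x : ℝ) : ℂ) := by push_cast; ring
  beta_reduce
  rw [abs_of_nonneg (by positivity), norm_mul, e, Complex.norm_cpow_eq_rpow_re_of_pos h0,
    Complex.norm_cpow_eq_rpow_re_of_pos h1, Real.mul_rpow h0.le h1.le]
  norm_num

lemma aux_norm (a b r c : ℝ) (hc : |c| ≤ 1) :
    ‖Complex.exp (Complex.I * (a : ℂ)) * Complex.exp (Complex.I * (b : ℂ)) * (r : ℂ) * (c : ℂ)‖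
      ≤ |r| := by
  rw [norm_mul, norm_mul, norm_mul, Complex.norm_exp_I_mul_ofReal, Complex.norm_exp_I_mul_ofReal,
    Complex.norm_real, Complex.norm_real, Real.norm_eq_abs, Real.norm_eq_abs]
  nlinarith [abs_nonneg r]

lemma aux_conj (a : ℝ) : (starRingEnd ℂ) (Complex.exp (Complex.I * (a : ℂ)))
    = Complex.exp (Complex.I * ((-a : ℝ) : ℂ)) := by
  rw [← Complex.exp_conj]
  simp

lemma aux_exp (k : ℤ) : Complex.exp (Complex.I * ((k * π : ℝ) : ℂ)) = ((Real.cos (k * π) : ℝ) : ℂ) := by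
  rw [mul_comm, Complex.exp_mul_I, ← Complex.ofReal_cos, ← Complex.ofReal_sin, Real.sin_int_mul_pi]
  simp

lemma aux_point (A B b b' r r' d d' e : ℝ) (C a : ℝ) (k : ℤ) (hb : b' = -b) (hr : r' = r)
    (hA : A = C - a) (hB : B = C + k * π) (he : e = Real.cos (k * π))
    (hd : d' = e * d) :
    Complex.exp (Complex.I * (A : ℂ)) * Complex.exp (Complex.I * (b' : ℂ)) * (r' : ℂ) * (d' : ℂ)
     = Complex.exp (Complex.I * (B : ℂ)) * (starRingEnd ℂ)
      (Complex.exp (Complex.I * (a : ℂ)) * Complex.exp (Complex.I * (b : ℂ)) * (r : ℂ) * (d : ℂ)) := by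
  subst hb hr hd hA hB he
  simp only [map_mul, aux_conj, Complex.conj_ofReal]
  have e1 : Complex.exp (Complex.I * ((C + k * π : ℝ) : ℂ))
      = Complex.exp (Complex.I * (C : ℂ)) * ((Real.cos (k * π) : ℝ) : ℂ) := by
    rw [← aux_exp, ← Complex.exp_add]; congr 1; push_cast; ring
  have e2 : Complex.exp (Complex.I * ((C - a : ℝ) : ℂ))
      = Complex.exp (Complex.I * (C : ℂ)) * Complex.exp (Complex.I * ((-a : ℝ) : ℂ)) := by
    rw [← Complex.exp_add]; congr 1; push_cast; ring
  rw [e1, e2, Complex.ofReal_mul]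
  ring

/-- The exact splitting identities (28a,b) of the paper, obtained from the
substitution `x ↦ 1 − x` on `[1/2, 1]`. -/
theorem stmt6 (t : ℝ) (α j : ℤ) (hEven : Even (α * j))
    (Fc Fs : ℝ → ℂ)
    (hFc : ∀ x : ℝ, Fc x =
      Complex.exp (Complex.I * ((π * ((α : ℝ) ^ 2 + (j : ℝ) ^ 2) * x / 4 : ℝ) : ℂ))
        * Complex.exp (Complex.I * ((t / 2 * Real.log ((1 - x) / x) : ℝ) : ℂ))
        * (((x * (1 - x)) ^ (-(1 : ℝ) / 4) : ℝ) : ℂ)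
        * ((Real.cos (π * (j : ℝ) * (α : ℝ) * x / 2) : ℝ) : ℂ))
    (hFs : ∀ x : ℝ, Fs x =
      Complex.exp (Complex.I * ((π * ((α : ℝ) ^ 2 + (j : ℝ) ^ 2) * x / 4 : ℝ) : ℂ))
        * Complex.exp (Complex.I * ((t / 2 * Real.log ((1 - x) / x) : ℝ) : ℂ))
        * (((x * (1 - x)) ^ (-(1 : ℝ) / 4) : ℝ) : ℂ)
        * ((Real.sin (π * (j : ℝ) * (α : ℝ) * x / 2) : ℝ) : ℂ)) :
    (∫ x in (1/2 : ℝ)..1, Fc x)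
        = Complex.exp (Complex.I * ((π * ((α : ℝ) + (j : ℝ)) ^ 2 / 4 : ℝ) : ℂ))
            * (starRingEnd ℂ) (∫ x in (0 : ℝ)..(1/2 : ℝ), Fc x) ∧
    (∫ x in (1/2 : ℝ)..1, Fs x)
        = -(Complex.exp (Complex.I * ((π * ((α : ℝ) + (j : ℝ)) ^ 2 / 4 : ℝ) : ℂ))
            * (starRingEnd ℂ) (∫ x in (0 : ℝ)..(1/2 : ℝ), Fs x)) ∧
    (∫ x in (0 : ℝ)..1, Fc x)
        = (∫ x in (0 : ℝ)..(1/2 : ℝ), Fc x)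
          + Complex.exp (Complex.I * ((π * ((α : ℝ) + (j : ℝ)) ^ 2 / 4 : ℝ) : ℂ))
            * (starRingEnd ℂ) (∫ x in (0 : ℝ)..(1/2 : ℝ), Fc x) ∧
    (∫ x in (0 : ℝ)..1, Fs x)
        = (∫ x in (0 : ℝ)..(1/2 : ℝ), Fs x)
          - Complex.exp (Complex.I * ((π * ((α : ℝ) + (j : ℝ)) ^ 2 / 4 : ℝ) : ℂ))
            * (starRingEnd ℂ) (∫ x in (0 : ℝ)..(1/2 : ℝ), Fs x) := by
  obtain ⟨k, hk⟩ := hEven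
  have hkr : (α : ℝ) * j = k + k := by exact_mod_cast hk
  have hlog : ∀ x : ℝ, t / 2 * Real.log ((1 - (1 - x)) / (1 - x))
      = -(t / 2 * Real.log ((1 - x) / x)) := by
    intro x
    rw [← inv_div (1 - x) (1 - (1 - x)), Real.log_inv, sub_sub_cancel]
    ring
  have hpow : ∀ x : ℝ, ((1 - x) * (1 - (1 - x))) ^ (-(1 : ℝ) / 4)
      = (x * (1 - x)) ^ (-(1 : ℝ) / 4) := by
    intro x
    congr 1
    ring
  have harg : ∀ x : ℝ, π * (j : ℝ) * (α : ℝ) * (1 - x) / 2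
      = k * π - π * (j : ℝ) * (α : ℝ) * x / 2 := by
    intro x
    linear_combination π / 2 * hkr
  have hC := aux_reflect Fc
    (Complex.exp (Complex.I * ((π * ((α : ℝ) + (j : ℝ)) ^ 2 / 4 : ℝ) : ℂ))) (by
      intro x
      rw [hFc, hFc]
      refine aux_point _ _ _ _ _ _ _ _ _ (π * ((α : ℝ) ^ 2 + (j : ℝ) ^ 2) / 4) _ k
        (hlog x) (hpow x) (by ring) (by linear_combination π / 2 * hkr) rfl ?_
      rw [harg, Real.cos_sub, Real.sin_int_mul_pi]
      ring)
  have hS := aux_reflect Fs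
    (-Complex.exp (Complex.I * ((π * ((α : ℝ) + (j : ℝ)) ^ 2 / 4 : ℝ) : ℂ))) (by
      intro x
      rw [hFs, hFs, neg_mul, ← mul_neg, ← map_neg, ← mul_neg, ← Complex.ofReal_neg]
      refine aux_point _ _ _ _ _ _ _ _ _ (π * ((α : ℝ) ^ 2 + (j : ℝ) ^ 2) / 4) _ k
        (hlog x) (hpow x) (by ring) (by linear_combination π / 2 * hkr) rfl ?_
      rw [harg, Real.sin_sub, Real.sin_int_mul_pi]
      ring)
  have hIc : IntervalIntegrable Fc volume 0 1 := by
    refine aux_integrable Fc ?_ ?_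
    · rw [funext hFc]
      fun_prop
    · intro x
      rw [hFc]
      exact aux_norm _ _ _ _ (Real.abs_cos_le_one _)
  have hIs : IntervalIntegrable Fs volume 0 1 := by
    refine aux_integrable Fs ?_ ?_
    · rw [funext hFs]
      fun_prop
    · intro x
      rw [hFs]
      exact aux_norm _ _ _ _ (Real.abs_sin_le_one _)
  have hsplit : ∀ G : ℝ → ℂ, IntervalIntegrable G volume 0 1 →
      (∫ x in (0 : ℝ)..1, G x) = (∫ x in (0 : ℝ)..(1/2 : ℝ), G x) + ∫ x in (1/2 : ℝ)..1, G x := by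
    intro G hG
    have hmem : (1/2 : ℝ) ∈ Set.uIcc (0 : ℝ) 1 := by
      rw [Set.uIcc_of_le zero_le_one]; constructor <;> norm_num
    refine (intervalIntegral.integral_add_adjacent_intervals (hG.mono_set ?_)
      (hG.mono_set ?_)).symm
    · exact Set.uIcc_subset_uIcc_left hmem
    · exact Set.uIcc_subset_uIcc_right hmem
  refine ⟨hC, by rw [hS, neg_mul], by rw [hsplit Fc hIc, hC], ?_⟩
  rw [hsplit Fs hIs, hS, neg_mul, sub_eq_add_neg]
end

section
/- Let P ≥ 1 be an integer and for y ∈ [−1/2, 1/2] define A_P(y) = ∑_{k ∈ ℤ, k ≠ 0} |k + y|^{−(2P+1)}. Then A_P(1/2) = 2^{2P+1} + (2/(2P)!)·∫_0^∞ v^{2P}·e^{−3v/2}/(1 − e^{−v}) dv, and A_P(y) ≤ A_P(1/2) for every y ∈ [−1/2, 1/2]. -/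
open Real MeasureTheory

lemma aux_summable (m : ℕ) (hm : 2 ≤ m) (a : ℝ) :
    Summable (fun n : ℕ => (|(n : ℝ) + a| ^ m)⁻¹) := by
  have h := (Real.summable_one_div_nat_add_rpow a (m : ℝ)).2 (by exact_mod_cast hm)
  simpa [Real.rpow_natCast, one_div] using h

lemma aux_split (m : ℕ) (hm : 2 ≤ m) (y : ℝ) :
    ∑' k : {k : ℤ // k ≠ 0}, (|((k : ℤ) : ℝ) + y| ^ m)⁻¹
      = ∑' n : ℕ, (|(n : ℝ) + (1 + y)| ^ m)⁻¹ + ∑' n : ℕ, (|(n : ℝ) + (1 - y)| ^ m)⁻¹ := by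
  have h0 := tsum_subtype {k : ℤ | k ≠ 0} (fun k : ℤ => (|(k : ℝ) + y| ^ m)⁻¹)
  have e1 : ∀ n : ℕ, Set.indicator {k : ℤ | k ≠ 0} (fun k : ℤ => (|(k : ℝ) + y| ^ m)⁻¹) ((n : ℤ) + 1)
      = (|(n : ℝ) + (1 + y)| ^ m)⁻¹ := by
    intro n
    rw [Set.indicator_of_mem (by simp only [Set.mem_ofPred_eq]; omega)]
    push_cast
    rw [add_assoc]
  have e2 : ∀ n : ℕ, Set.indicator {k : ℤ | k ≠ 0} (fun k : ℤ => (|(k : ℝ) + y| ^ m)⁻¹) (-((n : ℤ) + 1))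
      = (|(n : ℝ) + (1 - y)| ^ m)⁻¹ := by
    intro n
    rw [Set.indicator_of_mem (by simp only [Set.mem_ofPred_eq]; omega)]
    push_cast
    rw [← abs_neg]
    congr 3
    ring
  have h1 := tsum_of_add_one_of_neg_add_one
    (f := Set.indicator {k : ℤ | k ≠ 0} (fun k : ℤ => (|(k : ℝ) + y| ^ m)⁻¹))
    (by simp only [e1]; exact aux_summable m hm _)
    (by simp only [e2]; exact aux_summable m hm _)
  simp only [e1, e2] at h1
  refine h0.trans (h1.trans ?_)
  simp

lemma aux_convex (m : ℕ) (a y : ℝ) (ha : 1 ≤ a) (h1 : -(1/2) ≤ y) (h2 : y ≤ 1/2) :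
    (|a + y| ^ m)⁻¹ + (|a - y| ^ m)⁻¹ ≤ (|a + 1/2| ^ m)⁻¹ + (|a - 1/2| ^ m)⁻¹ := by
  rw [abs_of_pos (by linarith), abs_of_pos (by linarith), abs_of_pos (by linarith),
    abs_of_pos (by linarith)]
  have hc := convexOn_zpow (𝕜 := ℝ) (-(m : ℤ))
  have hp : a + 1/2 ∈ Set.Ioi (0 : ℝ) := by simp only [Set.mem_Ioi]; linarith
  have hq : a - 1/2 ∈ Set.Ioi (0 : ℝ) := by simp only [Set.mem_Ioi]; linarith
  have k1 := hc.2 hp hq (show 0 ≤ 1/2 + y by linarith) (show 0 ≤ 1/2 - y by linarith) (by ring)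
  have k2 := hc.2 hp hq (show 0 ≤ 1/2 - y by linarith) (show 0 ≤ 1/2 + y by linarith) (by ring)
  simp only [smul_eq_mul, zpow_neg, zpow_natCast] at k1 k2
  rw [show (1/2 + y) * (a + 1/2) + (1/2 - y) * (a - 1/2) = a + y by ring] at k1
  rw [show (1/2 - y) * (a + 1/2) + (1/2 + y) * (a - 1/2) = a - y by ring] at k2
  linarith

lemma aux_gamma (p : ℕ) (b : ℝ) (hb : 0 < b) :
    ∫ v in Set.Ioi (0 : ℝ), v ^ p * Real.exp (-(b * v)) = (Nat.factorial p : ℝ) * (b ^ (p + 1))⁻¹ := by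
  have h := Real.integral_rpow_mul_exp_neg_mul_Ioi (a := (p : ℝ) + 1) (r := b) (by positivity) hb
  rw [Real.Gamma_nat_eq_factorial] at h
  simp only [add_sub_cancel_right, Real.rpow_natCast] at h
  rw [h, ← Nat.cast_add_one, Real.rpow_natCast, one_div, inv_pow, mul_comm]

lemma aux_integral (p : ℕ) (hp : 1 ≤ p) :
    ∫ v in Set.Ioi (0 : ℝ), v ^ p * Real.exp (-(3 * v / 2)) / (1 - Real.exp (-v))
      = (Nat.factorial p : ℝ) * ∑' n : ℕ, (|(n : ℝ) + 3/2| ^ (p + 1))⁻¹ := by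
  have hI : ∀ n : ℕ, ∫ v in Set.Ioi (0 : ℝ), v ^ p * Real.exp (-(((n : ℝ) + 3/2) * v))
      = (Nat.factorial p : ℝ) * (|(n : ℝ) + 3/2| ^ (p + 1))⁻¹ := by
    intro n
    rw [aux_gamma p _ (by positivity), abs_of_pos (by positivity)]
  have hint : ∀ n : ℕ, Integrable (fun v : ℝ => v ^ p * Real.exp (-(((n : ℝ) + 3/2) * v)))
      (volume.restrict (Set.Ioi 0)) := by
    intro n
    by_contra hcon
    have h1 := integral_undef hcon
    rw [hI n] at h1
    have : 0 < (Nat.factorial p : ℝ) * (|(n : ℝ) + 3/2| ^ (p + 1))⁻¹ := by positivity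
    linarith
  have hnorm : ∀ n : ℕ, ∫ v in Set.Ioi (0 : ℝ), ‖v ^ p * Real.exp (-(((n : ℝ) + 3/2) * v))‖
      = (Nat.factorial p : ℝ) * (|(n : ℝ) + 3/2| ^ (p + 1))⁻¹ := by
    intro n
    rw [← hI n]
    refine setIntegral_congr_fun measurableSet_Ioi fun v hv => ?_
    have hv' : (0 : ℝ) < v := hv
    exact Real.norm_of_nonneg (by positivity)
  have hs := hasSum_integral_of_summable_integral_norm hint
    (by simp only [hnorm]; exact (aux_summable (p + 1) (by omega) _).mul_left _)
  have hs2 := hs.tsum_eq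
  simp only [hI] at hs2
  rw [tsum_mul_left] at hs2
  rw [hs2]
  refine setIntegral_congr_fun measurableSet_Ioi fun v hv => ?_
  have hv' : (0 : ℝ) < v := hv
  have hg := tsum_geometric_of_lt_one (Real.exp_pos (-v)).le (by simpa using hv')
  have : ∀ n : ℕ, v ^ p * Real.exp (-(((n : ℝ) + 3/2) * v))
      = v ^ p * Real.exp (-(3 * v / 2)) * Real.exp (-v) ^ n := by
    intro n
    rw [← Real.exp_nat_mul, mul_assoc, ← Real.exp_add]
    congr 2
    ring
  simp only [this]
  rw [tsum_mul_left, hg, div_eq_mul_inv]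

/-- Eq. (62) of the paper together with the maximality claim: the series
`A_P(y) = ∑_{k ≠ 0} |k + y|^{−(2P+1)}` attains its maximum over `[−1/2, 1/2]`
at `y = 1/2`, and its value there is `2^{2P+1} + (2/(2P)!)·∫_0^∞ v^{2P}·e^{−3v/2}/(1 − e^{−v}) dv`. -/
theorem stmt15 (P : ℕ) (hP : 1 ≤ P)
    (A : ℝ → ℝ)
    (hA : ∀ y : ℝ, A y = ∑' k : {k : ℤ // k ≠ 0}, (|((k : ℤ) : ℝ) + y| ^ (2 * P + 1))⁻¹) :
    A (1/2) = 2 ^ (2 * P + 1)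
        + 2 / (Nat.factorial (2 * P) : ℝ) *
          ∫ v in Set.Ioi (0 : ℝ), v ^ (2 * P) * Real.exp (-(3 * v / 2)) / (1 - Real.exp (-v)) ∧
      ∀ y ∈ Set.Icc (-(1/2) : ℝ) (1/2), A y ≤ A (1/2) := by
  have hm : 2 ≤ 2 * P + 1 := by omega
  refine ⟨?_, ?_⟩
  · rw [hA, aux_split _ hm, aux_integral (2 * P) (by omega)]
    have h3 := (aux_summable (2 * P + 1) hm (1 - 1/2)).tsum_eq_zero_add
    rw [h3]
    have hf : (Nat.factorial (2 * P) : ℝ) ≠ 0 := by positivity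
    have e1 : ∀ n : ℕ, ((n + 1 : ℕ) : ℝ) + (1 - 1/2) = (n : ℝ) + 3/2 := by
      intro n; push_cast; ring
    simp only [e1]
    rw [show (1 : ℝ) + 1/2 = 3/2 by norm_num,
      show ((|((0 : ℕ) : ℝ) + (1 - 1/2)| ^ (2 * P + 1))⁻¹ : ℝ) = 2 ^ (2 * P + 1) by
        rw [← inv_pow]; norm_num]
    field_simp
    ring
  · rintro y ⟨h1, h2⟩
    have hs := fun a : ℝ => aux_summable (2 * P + 1) hm a
    rw [hA, hA, aux_split _ hm, aux_split _ hm, ← (hs _).tsum_add (hs _),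
      ← (hs _).tsum_add (hs _)]
    refine ((hs _).add (hs _)).tsum_le_tsum (fun n => ?_) ((hs _).add (hs _))
    have := aux_convex (2 * P + 1) ((n : ℝ) + 1) y (by linarith [n.cast_nonneg (α := ℝ)]) h1 h2
    simpa only [← add_assoc, ← add_sub_assoc] using this
end

section
/- Let τ > 0 be real, let P ≥ 1 be an integer, and set ρ = P/τ. Then the tail integral satisfies ‖∫_{2√ρ}^{∞} u^{2P}·e^{−τu²}/(1 + iu²) du‖ ≤ (4ρ)^{P − 1/2}·e^{−4P}/τ. -/
open Real MeasureTheory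

lemma aux_tendsto (τ : ℝ) (hτ : 0 < τ) (n : ℕ) :
    Filter.Tendsto (fun u : ℝ => -(u ^ n * Real.exp (-(τ * u ^ 2)) / τ)) Filter.atTop (nhds 0) := by
  have h := (rpow_mul_exp_neg_mul_sq_isLittleO_exp_neg hτ (n : ℝ))
  have h2 : Filter.Tendsto (fun x : ℝ => Real.exp (-(1/2) * x)) Filter.atTop (nhds 0) := by
    refine Real.tendsto_exp_atBot.comp ?_
    exact Filter.tendsto_id.const_mul_atTop_of_neg (by norm_num)
  have h3 := h.trans_tendsto h2
  have h4 := (h3.div_const τ).neg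
  simp only [zero_div, neg_zero] at h4
  refine h4.congr fun u => ?_
  rw [Real.rpow_natCast, neg_mul]

lemma aux_deriv (τ : ℝ) (hτ : 0 < τ) (k : ℕ) (u : ℝ) :
    HasDerivAt (fun u : ℝ => -(u ^ (2*k+1) * Real.exp (-(τ * u ^ 2)) / τ))
      (u ^ (2*k) * Real.exp (-(τ * u ^ 2)) * (2 * u ^ 2 - (2*k+1) / τ)) u := by
  have h1 : HasDerivAt (fun u : ℝ => -(τ * u ^ 2)) (-(τ * (2 * u))) u := by
    exact ((hasDerivAt_pow 2 u).const_mul τ).neg.congr_deriv (by simp)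
  have h := (((hasDerivAt_pow (2*k+1) u).mul h1.exp).div_const τ).neg
  refine h.congr_deriv ?_
  simp only [Nat.add_sub_cancel]
  push_cast
  field_simp
  ring

/-- The estimate for the second integral in eq. (139) of the paper: the
contribution of the tail `u ≥ 2√ρ` beyond twice the saddle `u = √(P/τ)` is
exponentially small. -/
theorem stmt16 (τ : ℝ) (hτ : 0 < τ) (P : ℕ) (hP : 1 ≤ P)
    (ρ : ℝ) (hρ : ρ = (P : ℝ) / τ) :
    ‖∫ u in Set.Ioi (2 * Real.sqrt ρ),
          ((u ^ (2 * P) * Real.exp (-(τ * u ^ 2)) : ℝ) : ℂ)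
            / (1 + Complex.I * ((u : ℝ) : ℂ) ^ 2)‖
      ≤ (4 * ρ) ^ ((P : ℝ) - 1/2) * Real.exp (-(4 * (P : ℝ))) / τ := by
  obtain ⟨k, rfl⟩ : ∃ k, P = k + 1 := ⟨P - 1, by omega⟩
  have hρ0 : 0 < ρ := by rw [hρ]; positivity
  set a := 2 * Real.sqrt ρ with ha
  have ha0 : 0 < a := by positivity
  have ha2 : a ^ 2 = 4 * ρ := by rw [ha, mul_pow, Real.sq_sqrt hρ0.le]; norm_num
  have hτρ : τ * ρ = k + 1 := by rw [hρ]; push_cast; field_simp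
  have key : ∀ u ∈ Set.Ioi a, u ^ 2 ≤ 2 * u ^ 2 - (2*k+1) / τ := by
    intro u hu
    have h1 : a ^ 2 ≤ u ^ 2 := pow_le_pow_left₀ ha0.le (le_of_lt hu) 2
    have h2 : (2*k+1) / τ ≤ a ^ 2 := by
      rw [div_le_iff₀ hτ, ha2]
      nlinarith [(Nat.cast_nonneg k : (0:ℝ) ≤ k)]
    linarith
  have hnn : ∀ u ∈ Set.Ioi a,
      0 ≤ u ^ (2*k) * Real.exp (-(τ * u ^ 2)) * (2 * u ^ 2 - (2*k+1) / τ) := by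
    intro u hu
    have h0 : 0 < u := ha0.trans hu
    have := key u hu
    exact mul_nonneg (by positivity) ((sq_nonneg u).trans this)
  have hint := integrableOn_Ioi_deriv_of_nonneg' (fun u _ => aux_deriv τ hτ k u) hnn
    (aux_tendsto τ hτ (2*k+1))
  have hval := integral_Ioi_of_hasDerivAt_of_nonneg' (fun u _ => aux_deriv τ hτ k u) hnn
    (aux_tendsto τ hτ (2*k+1))
  have hb : (4 * ρ) ^ (((k + 1 : ℕ) : ℝ) - 1/2) = a ^ (2*k+1) := by
    rw [← ha2, ← Real.rpow_natCast a 2, ← Real.rpow_mul ha0.le, ← Real.rpow_natCast]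
    congr 1
    push_cast
    ring
  have he : -(4 * (((k + 1 : ℕ) : ℝ))) = -(τ * a ^ 2) := by
    rw [ha2]; push_cast; linarith
  rw [hb, he]
  have hfin : a ^ (2*k+1) * Real.exp (-(τ * a ^ 2)) / τ
      = ∫ u in Set.Ioi a, u ^ (2*k) * Real.exp (-(τ * u ^ 2)) * (2 * u ^ 2 - (2*k+1) / τ) := by
    rw [hval]; ring
  rw [hfin]
  refine norm_integral_le_of_norm_le hint ?_
  refine (ae_restrict_iff' measurableSet_Ioi).2 (Filter.Eventually.of_forall fun u hu => ?_)
  have h0 : 0 < u := ha0.trans hu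
  have hd : 1 ≤ ‖(1 + Complex.I * ((u : ℝ) : ℂ) ^ 2)‖ := by
    have := Complex.abs_re_le_norm (1 + Complex.I * ((u : ℝ) : ℂ) ^ 2)
    have hre : (1 + Complex.I * ((u : ℝ) : ℂ) ^ 2).re = 1 := by
      simp [← Complex.ofReal_pow]
    rw [hre, abs_one] at this
    exact this
  rw [norm_div, Complex.norm_real, Real.norm_of_nonneg (by positivity)]
  refine (div_le_self (by positivity) hd).trans ?_
  calc u ^ (2 * (k+1)) * Real.exp (-(τ * u ^ 2))
      = u ^ (2*k) * Real.exp (-(τ * u ^ 2)) * u ^ 2 := by ring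
    _ ≤ _ := mul_le_mul_of_nonneg_left (key u hu) (by positivity)
end

section
/- Let t ≥ 6 and ε ∈ (0, 1] be real, let pc > 1, and let θ be real with |θ| ≤ 1/2. Set a = √(8t/π), α_E = a·(pc + 1)/(2√pc), and M = ((ε²t)^{1/6}/√(2π))·(2α_E/a − a/(2α_E)). If α_E ≤ (ε·t²)^{1/3}/(√π·log t), then 2|θ|·(pc − 1)/M ≤ √π·2|θ|/log t; in particular 2|θ|·(pc − 1)/M < 1. -/
open Real

/-- Eq. (126) of the paper: with the collection size `M = M_t(α_E)` prescribed
by eq. (83b) and the cut-off `α_E ≤ (ε·t²)^{1/3}/(√π·log t)`, the extra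
amplitude factor `2|θ|·(pc − 1)/M` never exceeds `√π·2|θ|/log t < 1`. -/
theorem stmt19 (t ε pc θ : ℝ) (ht : 6 ≤ t) (hε : ε ∈ Set.Ioc (0 : ℝ) 1)
    (hpc : 1 < pc) (hθ : |θ| ≤ 1/2)
    (a αE M : ℝ)
    (ha : a = Real.sqrt (8 * t / π))
    (hαE : αE = a * (pc + 1) / (2 * Real.sqrt pc))
    (hM : M = (ε ^ 2 * t) ^ ((1 : ℝ) / 6) / Real.sqrt (2 * π)
        * (2 * αE / a - a / (2 * αE)))
    (hcut : αE ≤ (ε * t ^ 2) ^ ((1 : ℝ) / 3) / (Real.sqrt π * Real.log t)) :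
    2 * |θ| * (pc - 1) / M ≤ Real.sqrt π * (2 * |θ|) / Real.log t ∧
      2 * |θ| * (pc - 1) / M < 1 := by
  have hL : Real.sqrt π < Real.log t := by
    have h1 : Real.log 6 ≤ Real.log t := Real.log_le_log (by norm_num) ht
    have h2 : 31 * Real.log 2 ≤ 12 * Real.log 6 := by
      have h := Real.log_le_log (x := (2 : ℝ) ^ 31) (y := (6 : ℝ) ^ 12) (by norm_num) (by norm_num)
      rw [Real.log_pow, Real.log_pow] at h
      exact_mod_cast h
    have h3 : Real.sqrt π < 1.78 := by
      rw [Real.sqrt_lt' (by norm_num)]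
      have := Real.pi_lt_d4
      norm_num at this ⊢
      linarith
    have h4 := Real.log_two_gt_d9
    norm_num at h3 h4
    linarith
  obtain ⟨hε0, hε1⟩ := hε
  have ht0 : 0 < t := by linarith
  have hp0 : 0 < pc := by linarith
  have hπ : 0 < Real.sqrt π := Real.sqrt_pos.2 Real.pi_pos
  have hL0 : 0 < Real.log t := hπ.trans hL
  have h20 : 0 < Real.sqrt 2 := Real.sqrt_pos.2 (by norm_num)
  have h22 : Real.sqrt 2 * Real.sqrt 2 = 2 := Real.mul_self_sqrt (by norm_num)
  have hs0 : 0 < Real.sqrt pc := Real.sqrt_pos.2 hp0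
  have hss : Real.sqrt pc * Real.sqrt pc = pc := Real.mul_self_sqrt hp0.le
  have hT0 : 0 < Real.sqrt t := Real.sqrt_pos.2 ht0
  have ha' : a = 2 * Real.sqrt 2 * Real.sqrt t / Real.sqrt π := by
    rw [ha, Real.sqrt_div (by positivity), show (8 : ℝ) * t = 2 ^ 2 * (2 * t) by ring,
      Real.sqrt_mul (by norm_num), Real.sqrt_sq (by norm_num), Real.sqrt_mul (by norm_num)]
    ring
  have hK : (ε * t ^ 2) ^ ((1 : ℝ) / 3) = (ε ^ 2 * t) ^ ((1 : ℝ) / 6) * Real.sqrt t := by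
    rw [Real.sqrt_eq_rpow, Real.mul_rpow hε0.le (by positivity), Real.mul_rpow (by positivity) ht0.le,
      ← Real.rpow_natCast, ← Real.rpow_natCast, ← Real.rpow_mul ht0.le, ← Real.rpow_mul hε0.le,
      mul_assoc, ← Real.rpow_add ht0]
    norm_num
  have hK0 : 0 < (ε ^ 2 * t) ^ ((1 : ℝ) / 6) := by positivity
  rw [hK] at hcut
  rw [Real.sqrt_mul (by norm_num : (0 : ℝ) ≤ 2)] at hM
  generalize (ε ^ 2 * t) ^ ((1 : ℝ) / 6) = K at *
  have ha0 : 0 < a := by rw [ha']; positivity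
  generalize Real.sqrt π = P at *
  generalize Real.log t = L at *
  generalize Real.sqrt t = T at *
  generalize Real.sqrt 2 = r at *
  generalize Real.sqrt pc = s at *
  set u := (pc + 1) / s with hu
  have hu0 : 0 < u := by positivity
  have huu : u * u = pc + 2 + 1 / pc := by
    rw [hu, div_mul_div_comm, hss]; field_simp; ring
  have hpi : 0 < 1 / pc := by positivity
  have e1 : 2 * αE / a = u := by rw [hαE, hu]; field_simp
  have e2 : a / (2 * αE) = 1 / u := by rw [← e1]; field_simp
  rw [e1, e2] at hM
  have hc : r * u * L ≤ K := by
    have e3 : αE = T / P * (r * u) := by rw [hαE, hu, ha']; field_simp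
    have e4 : K * T / (P * L) = T / P * (K / L) := by field_simp
    rw [e3, e4] at hcut
    have := le_of_mul_le_mul_left hcut (by positivity)
    rwa [le_div_iff₀ hL0] at this
  have hd : u * (u - 1 / u) = u * u - 1 := by field_simp
  have hd0 : 0 < u - 1 / u := by
    by_contra h
    push Not at h
    nlinarith
  have hPM : P * M = K / r * (u - 1 / u) := by rw [hM]; field_simp
  have hKr : u * L ≤ K / r := by rw [le_div_iff₀ h20]; linarith
  have hM0 : 0 < M := by rw [hM]; positivity
  have key : (pc - 1) * L ≤ P * M := by
    rw [hPM]
    calc (pc - 1) * L ≤ (u * u - 1) * L := by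
          apply mul_le_mul_of_nonneg_right _ hL0.le
          linarith
      _ = u * L * (u - 1 / u) := by rw [← hd]; ring
      _ ≤ _ := mul_le_mul_of_nonneg_right hKr hd0.le
  have hA := abs_nonneg θ
  have first : 2 * |θ| * (pc - 1) / M ≤ P * (2 * |θ|) / L := by
    rw [div_le_div_iff₀ hM0 hL0]
    calc _ = 2 * |θ| * ((pc - 1) * L) := by ring
      _ ≤ 2 * |θ| * (P * M) := by gcongr
      _ = _ := by ring
  refine ⟨first, first.trans_lt ?_⟩
  rw [div_lt_one hL0]
  nlinarith
end
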